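/- arXiv:2001.00303 — 2 statements merged into one kernel-verified Lean document; each statement's English description precedes it below -/
import Mathlib

section
/- There is a universal constant c ≥ 1 such that: for every δ ∈ (0,1), every integer Δ ≥ 3, every simple graph G on [n] with n ≥ 2 and maximum degree at most Δ, and λ = (1−δ)·λ_c(Δ), the Glauber dynamics of the hardcore distribution μ = μ_{G,λ} satisfies Var_μ(f) ≤ n^{exp(c/δ)} · E(f,f) for every function f : Finset (Fin n) → ℝ (i.e. its spectral gap is at least n^{−exp(c/δ)}). -/
open scoped Classical
open Finset

noncomputable section

namespace PaperStmt

variable {n : ℕ}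

/-- `S` is an independent set of `G`. -/
def IsIndepSet (G : SimpleGraph (Fin n)) (S : Finset (Fin n)) : Prop :=
  ∀ i ∈ S, ∀ j ∈ S, ¬ G.Adj i j

/-- The hardcore partition function `Z_G(λ)`. -/
def hardcoreZ (G : SimpleGraph (Fin n)) (lam : ℝ) : ℝ :=
  ∑ S : Finset (Fin n), if IsIndepSet G S then lam ^ S.card else 0

/-- The hardcore distribution `μ_{G,λ}`. -/
def hardcore (G : SimpleGraph (Fin n)) (lam : ℝ) : Finset (Fin n) → ℝ :=
  fun S => if IsIndepSet G S then lam ^ S.card / hardcoreZ G lam else 0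

/-- The uniqueness threshold `λ_c(Δ) = (Δ-1)^(Δ-1) / (Δ-2)^Δ`. -/
def lamC (Δ : ℕ) : ℝ := ((Δ : ℝ) - 1) ^ (Δ - 1) / ((Δ : ℝ) - 2) ^ Δ

/-- The Glauber dynamics transition kernel of `μ`. -/
def glauber (μ : Finset (Fin n) → ℝ) (S T : Finset (Fin n)) : ℝ :=
  (1 / n : ℝ) * ∑ i : Fin n,
    ((if T = S.erase i then μ (S.erase i) / (μ (S.erase i) + μ (insert i S)) else 0)
      + (if T = insert i S then μ (insert i S) / (μ (S.erase i) + μ (insert i S)) else 0))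

/-- The Dirichlet form of the Glauber dynamics of `μ`. -/
def dirichletForm (μ : Finset (Fin n) → ℝ) (f : Finset (Fin n) → ℝ) : ℝ :=
  (1 / 2 : ℝ) * ∑ S : Finset (Fin n), ∑ T : Finset (Fin n),
    μ S * glauber μ S T * (f S - f T) ^ 2

/-- The variance of `f` under `μ`. -/
def varianceE (μ : Finset (Fin n) → ℝ) (f : Finset (Fin n) → ℝ) : ℝ :=
  (∑ S : Finset (Fin n), μ S * f S ^ 2) - (∑ S : Finset (Fin n), μ S * f S) ^ 2

/-- The unnormalised hardcore weight of `S`. -/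
def hcWeight (G : SimpleGraph (Fin n)) (lam : ℝ) (S : Finset (Fin n)) : ℝ :=
  if IsIndepSet G S then lam ^ S.card else 0

/-- The partition function of the subgraph induced on `U`. -/
def partitionOn (G : SimpleGraph (Fin n)) (lam : ℝ) (U : Finset (Fin n)) : ℝ :=
  ∑ S ∈ U.powerset, hcWeight G lam S

/-- The expectation under the hardcore distribution of the subgraph induced on `U`. -/
def expOn (G : SimpleGraph (Fin n)) (lam : ℝ) (U : Finset (Fin n))
    (f : Finset (Fin n) → ℝ) : ℝ :=
  (∑ S ∈ U.powerset, hcWeight G lam S * f S) / partitionOn G lam U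

/-- The vertices of `U` outside the closed neighbourhood of `v`. -/
def awayFrom (G : SimpleGraph (Fin n)) (U : Finset (Fin n)) (v : Fin n) : Finset (Fin n) :=
  U.filter fun u => u ≠ v ∧ ¬ G.Adj v u

/-- The indicator of `v` belonging to the random set. -/
def occ (v : Fin n) (S : Finset (Fin n)) : ℝ := if v ∈ S then 1 else 0

/-- The occupation probability of `v` in the subgraph induced on `U`. -/
def occProb (G : SimpleGraph (Fin n)) (lam : ℝ) (U : Finset (Fin n)) (v : Fin n) : ℝ :=
  expOn G lam U (occ v)

/-- The covariance of `f` and `g` in the subgraph induced on `U`. -/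
def covOn (G : SimpleGraph (Fin n)) (lam : ℝ) (U : Finset (Fin n))
    (f g : Finset (Fin n) → ℝ) : ℝ :=
  expOn G lam U (fun S => f S * g S) - expOn G lam U f * expOn G lam U g

/-- The function on configurations containing `v` obtained from `f`. -/
def pin (v : Fin n) (f : Finset (Fin n) → ℝ) : Finset (Fin n) → ℝ := fun S => f (insert v S)

/-- The local contribution of `j` to the Dirichlet form. -/
def localGrad (G : SimpleGraph (Fin n)) (lam : ℝ) (j : Fin n) (f : Finset (Fin n) → ℝ)
    (S : Finset (Fin n)) : ℝ :=
  if j ∉ S ∧ IsIndepSet G (insert j S) then lam / (1 + lam) * (f (insert j S) - f S) ^ 2 else 0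

/-- The sum of the expected conditional single-site variances in the subgraph induced on `U`. -/
def gradOn (G : SimpleGraph (Fin n)) (lam : ℝ) (U : Finset (Fin n))
    (f : Finset (Fin n) → ℝ) : ℝ :=
  ∑ j ∈ U, expOn G lam U (localGrad G lam j f)

/-- The total influence of `v` on the other vertices of `U`. -/
def influence (G : SimpleGraph (Fin n)) (lam : ℝ) (U : Finset (Fin n)) (v : Fin n) : ℝ :=
  ∑ u, |occProb G lam (awayFrom G U v) u - occProb G lam (U.erase v) u|

section Basic

variable {G : SimpleGraph (Fin n)} {lam : ℝ}

lemma IsIndepSet.mono {S T : Finset (Fin n)} (h : S ⊆ T) (hT : IsIndepSet G T) :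
    IsIndepSet G S :=
  fun i hi j hj => hT i (h hi) j (h hj)

lemma isIndepSet_insert {v : Fin n} {S : Finset (Fin n)} :
    IsIndepSet G (insert v S) ↔ IsIndepSet G S ∧ ∀ u ∈ S, ¬ G.Adj v u := by
  constructor
  · intro h
    exact ⟨h.mono (subset_insert _ _), fun u hu =>
      h v (mem_insert_self _ _) u (mem_insert_of_mem hu)⟩
  · rintro ⟨h, h'⟩ i hi j hj
    rcases mem_insert.1 hi with rfl | hiS <;> rcases mem_insert.1 hj with rfl | hjS
    · exact G.loopless.irrefl _
    · exact h' j hjS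
    · exact fun hadj => h' i hiS hadj.symm
    · exact h i hiS j hjS

lemma mem_awayFrom {U : Finset (Fin n)} {v u : Fin n} :
    u ∈ awayFrom G U v ↔ u ∈ U ∧ u ≠ v ∧ ¬ G.Adj v u := by
  simp [awayFrom]

lemma awayFrom_subset_erase (U : Finset (Fin n)) (v : Fin n) :
    awayFrom G U v ⊆ U.erase v := by
  intro u hu
  rw [mem_awayFrom] at hu
  exact mem_erase.2 ⟨hu.2.1, hu.1⟩

lemma notMem_awayFrom (U : Finset (Fin n)) (v : Fin n) : v ∉ awayFrom G U v := by
  simp [mem_awayFrom]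

lemma isIndepSet_insert_of_subset_awayFrom {U S : Finset (Fin n)} {v : Fin n}
    (h : S ⊆ awayFrom G U v) : IsIndepSet G (insert v S) ↔ IsIndepSet G S := by
  rw [isIndepSet_insert]
  exact ⟨And.left, fun hS => ⟨hS, fun u hu => (mem_awayFrom.1 (h hu)).2.2⟩⟩

lemma not_isIndepSet_insert {U S : Finset (Fin n)} {v : Fin n} (h : S ⊆ U.erase v)
    (h' : ¬ S ⊆ awayFrom G U v) : ¬ IsIndepSet G (insert v S) := by
  rw [isIndepSet_insert]
  rintro ⟨-, hadj⟩
  refine h' fun u hu => mem_awayFrom.2 ⟨?_, ?_, hadj u hu⟩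
  · exact mem_of_mem_erase (h hu)
  · exact ne_of_mem_erase (h hu)

lemma hcWeight_nonneg (hl : 0 < lam) (S : Finset (Fin n)) : 0 ≤ hcWeight G lam S := by
  unfold hcWeight; split_ifs <;> positivity

lemma sum_hcWeight_split {U : Finset (Fin n)} {v : Fin n} (hv : v ∈ U)
    (f : Finset (Fin n) → ℝ) :
    ∑ S ∈ U.powerset, hcWeight G lam S * f S =
      ∑ S ∈ (U.erase v).powerset, hcWeight G lam S * f S +
        lam * ∑ S ∈ (awayFrom G U v).powerset, hcWeight G lam S * pin v f S := by
  conv_lhs => rw [← insert_erase hv]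
  rw [sum_powerset_insert (notMem_erase v U)]
  congr 1
  rw [mul_sum]
  symm
  rw [← sum_subset (powerset_mono.2 (awayFrom_subset_erase (G := G) U v))]
  · refine sum_congr rfl fun S hS => ?_
    rw [mem_powerset] at hS
    have hvS : v ∉ S := fun h => notMem_awayFrom U v (hS h)
    simp only [hcWeight, isIndepSet_insert_of_subset_awayFrom hS, card_insert_of_notMem hvS, pin]
    split_ifs <;> ring
  · intro S hS hS'
    rw [mem_powerset] at hS hS'
    simp [hcWeight, not_isIndepSet_insert hS hS']

lemma partitionOn_split {U : Finset (Fin n)} {v : Fin n} (hv : v ∈ U) :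
    partitionOn G lam U =
      partitionOn G lam (U.erase v) + lam * partitionOn G lam (awayFrom G U v) := by
  simpa [partitionOn, pin] using sum_hcWeight_split (G := G) (lam := lam) hv (fun _ => 1)

lemma partitionOn_mono (hl : 0 < lam) {U W : Finset (Fin n)} (h : U ⊆ W) :
    partitionOn G lam U ≤ partitionOn G lam W :=
  sum_le_sum_of_subset_of_nonneg (powerset_mono.2 h) fun S _ _ => hcWeight_nonneg hl S

lemma partitionOn_pos (hl : 0 < lam) (U : Finset (Fin n)) : 0 < partitionOn G lam U := by
  refine lt_of_lt_of_le ?_ (partitionOn_mono hl (empty_subset U))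
  simp [partitionOn, hcWeight, IsIndepSet]

lemma expOn_const (hl : 0 < lam) (U : Finset (Fin n)) (a : ℝ) :
    expOn G lam U (fun _ => a) = a := by
  have := (partitionOn_pos (G := G) hl U).ne'
  rw [expOn, ← sum_mul]
  exact mul_div_cancel_left₀ a this

lemma expOn_congr {U : Finset (Fin n)} {f g : Finset (Fin n) → ℝ}
    (h : ∀ S ⊆ U, f S = g S) : expOn G lam U f = expOn G lam U g := by
  unfold expOn
  congr 1
  exact sum_congr rfl fun S hS => by rw [h S (mem_powerset.1 hS)]

lemma expOn_nonneg (hl : 0 < lam) {U : Finset (Fin n)} {f : Finset (Fin n) → ℝ}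
    (h : ∀ S, 0 ≤ f S) : 0 ≤ expOn G lam U f :=
  div_nonneg (sum_nonneg fun S _ => mul_nonneg (hcWeight_nonneg hl S) (h S))
    (partitionOn_pos hl U).le

lemma expOn_add (U : Finset (Fin n)) (f g : Finset (Fin n) → ℝ) :
    expOn G lam U (fun S => f S + g S) = expOn G lam U f + expOn G lam U g := by
  simp only [expOn, mul_add, sum_add_distrib, add_div]

lemma expOn_const_mul (U : Finset (Fin n)) (a : ℝ) (f : Finset (Fin n) → ℝ) :
    expOn G lam U (fun S => a * f S) = a * expOn G lam U f := by
  simp only [expOn, mul_left_comm _ a, ← mul_sum, mul_div_assoc]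

lemma expOn_sum {ι : Type*} (U : Finset (Fin n)) (s : Finset ι)
    (f : ι → Finset (Fin n) → ℝ) :
    expOn G lam U (fun S => ∑ i ∈ s, f i S) = ∑ i ∈ s, expOn G lam U (f i) := by
  simp only [expOn, mul_sum]
  rw [sum_comm, sum_div]

lemma occProb_eq {U : Finset (Fin n)} {v : Fin n} (hv : v ∈ U) :
    occProb G lam U v = lam * partitionOn G lam (awayFrom G U v) / partitionOn G lam U := by
  rw [occProb, expOn, sum_hcWeight_split hv, sum_eq_zero, zero_add]
  · simp [pin, occ, partitionOn]
  · intro S hS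
    have : v ∉ S := fun h => notMem_erase v U (mem_powerset.1 hS h)
    simp [occ, this]

lemma occProb_eq_zero {U : Finset (Fin n)} {v : Fin n} (hv : v ∉ U) :
    occProb G lam U v = 0 := by
  rw [occProb, expOn, sum_eq_zero, zero_div]
  intro S hS
  have : v ∉ S := fun h => hv (mem_powerset.1 hS h)
  simp [occ, this]

lemma one_sub_occProb (hl : 0 < lam) {U : Finset (Fin n)} {v : Fin n} (hv : v ∈ U) :
    1 - occProb G lam U v = partitionOn G lam (U.erase v) / partitionOn G lam U := by
  have := (partitionOn_pos (G := G) hl U).ne'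
  rw [occProb_eq hv, eq_div_iff this, sub_mul, div_mul_cancel₀ _ this, partitionOn_split hv]
  ring

lemma occProb_nonneg (hl : 0 < lam) (U : Finset (Fin n)) (v : Fin n) :
    0 ≤ occProb G lam U v :=
  expOn_nonneg hl fun S => by unfold occ; split_ifs <;> norm_num

lemma occProb_le (hl : 0 < lam) {U : Finset (Fin n)} {v : Fin n} (hv : v ∈ U) :
    occProb G lam U v ≤ lam / (1 + lam) := by
  rw [occProb_eq hv, div_le_div_iff₀ (partitionOn_pos hl U) (by positivity),
    partitionOn_split hv]
  have := partitionOn_mono (G := G) hl (awayFrom_subset_erase (G := G) U v)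
  nlinarith

lemma occProb_le_one (hl : 0 < lam) {U : Finset (Fin n)} {v : Fin n} (hv : v ∈ U) :
    occProb G lam U v ≤ 1 :=
  (occProb_le hl hv).trans (by rw [div_le_one (by positivity)]; linarith)

lemma expOn_split (hl : 0 < lam) {U : Finset (Fin n)} {v : Fin n} (hv : v ∈ U)
    (f : Finset (Fin n) → ℝ) :
    expOn G lam U f = occProb G lam U v * expOn G lam (awayFrom G U v) (pin v f) +
      (1 - occProb G lam U v) * expOn G lam (U.erase v) f := by
  have h1 := (partitionOn_pos (G := G) hl U).ne'
  have h2 := (partitionOn_pos (G := G) hl (U.erase v)).ne'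
  have h3 := (partitionOn_pos (G := G) hl (awayFrom G U v)).ne'
  rw [one_sub_occProb hl hv, occProb_eq hv, expOn, sum_hcWeight_split hv, expOn, expOn]
  field_simp
  ring

lemma covOn_comm (U : Finset (Fin n)) (f g : Finset (Fin n) → ℝ) :
    covOn G lam U f g = covOn G lam U g f := by
  simp only [covOn, mul_comm]

lemma covOn_add_left (U : Finset (Fin n)) (f g k : Finset (Fin n) → ℝ) :
    covOn G lam U (fun S => f S + g S) k = covOn G lam U f k + covOn G lam U g k := by
  simp only [covOn, add_mul, expOn_add]
  ring

lemma covOn_const_mul_left (U : Finset (Fin n)) (a : ℝ) (f k : Finset (Fin n) → ℝ) :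
    covOn G lam U (fun S => a * f S) k = a * covOn G lam U f k := by
  simp only [covOn, mul_assoc, expOn_const_mul]
  ring

lemma covOn_sum_left {ι : Type*} (U : Finset (Fin n)) (s : Finset ι)
    (f : ι → Finset (Fin n) → ℝ) (k : Finset (Fin n) → ℝ) :
    covOn G lam U (fun S => ∑ i ∈ s, f i S) k = ∑ i ∈ s, covOn G lam U (f i) k := by
  simp only [covOn, sum_mul, expOn_sum, sum_sub_distrib]

lemma expOn_sub_sq (hl : 0 < lam) (U : Finset (Fin n)) (f : Finset (Fin n) → ℝ) (a : ℝ) :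
    expOn G lam U (fun S => (f S - a) ^ 2) =
      covOn G lam U f f + (expOn G lam U f - a) ^ 2 := by
  have : (fun S => (f S - a) ^ 2) = fun S => (f S * f S + (-2 * a) * f S) + a ^ 2 := by
    funext S; ring
  rw [this, expOn_add, expOn_add, expOn_const_mul, expOn_const hl, covOn]
  ring

lemma covOn_self_nonneg (hl : 0 < lam) (U : Finset (Fin n)) (f : Finset (Fin n) → ℝ) :
    0 ≤ covOn G lam U f f := by
  have := expOn_sub_sq (G := G) hl U f (expOn G lam U f)
  rw [sub_self] at this
  have h2 : 0 ≤ expOn G lam U (fun S => (f S - expOn G lam U f) ^ 2) :=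
    expOn_nonneg hl fun S => sq_nonneg _
  linarith

/-- The law of total variance for the occupation of one vertex. -/
lemma covOn_self_split (hl : 0 < lam) {U : Finset (Fin n)} {v : Fin n} (hv : v ∈ U)
    (f : Finset (Fin n) → ℝ) :
    covOn G lam U f f =
      occProb G lam U v * covOn G lam (awayFrom G U v) (pin v f) (pin v f) +
      (1 - occProb G lam U v) * covOn G lam (U.erase v) f f +
      occProb G lam U v * (1 - occProb G lam U v) *
        (expOn G lam (awayFrom G U v) (pin v f) - expOn G lam (U.erase v) f) ^ 2 := by
  rw [covOn, expOn_split hl hv, expOn_split hl hv f, covOn, covOn]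
  change _ * expOn G lam (awayFrom G U v) (fun S => pin v f S * pin v f S) + _ - _ = _
  ring

lemma covOn_occ (hl : 0 < lam) {U : Finset (Fin n)} {v : Fin n} (hv : v ∈ U)
    (f : Finset (Fin n) → ℝ) :
    covOn G lam U (occ v) f = occProb G lam U v * (1 - occProb G lam U v) *
        (expOn G lam (awayFrom G U v) (pin v f) - expOn G lam (U.erase v) f) := by
  have h0 : expOn G lam (U.erase v) (fun S => occ v S * f S) = 0 := by
    rw [expOn_congr (g := fun _ => 0), expOn_const hl]
    intro S hS
    have : v ∉ S := fun h => notMem_erase v U (hS h)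
    simp [occ, this]
  have h1 : pin v (fun S => occ v S * f S) = pin v f := by
    funext S; simp [pin, occ]
  have h2 : expOn G lam U (occ v) = occProb G lam U v := rfl
  rw [covOn, expOn_split hl hv, h0, h1, h2, expOn_split hl hv f]
  ring

end Basic

section Influence

variable {G : SimpleGraph (Fin n)} {lam : ℝ}

lemma expOn_pin_occ (hl : 0 < lam) (U : Finset (Fin n)) (u v : Fin n) :
    expOn G lam (awayFrom G U v) (pin v (occ u)) =
      occProb G lam (awayFrom G U v) u + if u = v then 1 else 0 := by
  split_ifs with h
  · subst h
    rw [occProb_eq_zero (notMem_awayFrom U u), zero_add]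
    have : pin u (occ u) = fun _ => (1 : ℝ) := by funext S; simp [pin, occ]
    rw [this, expOn_const hl]
  · rw [add_zero, occProb]
    congr 1
    funext S
    simp [pin, occ, h]

/-- Deleting a vertex `w` changes the occupation probabilities by at most its own occupation
probability times its total influence. -/
lemma sum_abs_occProb_erase_sub (hl : 0 < lam) {U : Finset (Fin n)} {w : Fin n} (hw : w ∈ U) :
    ∑ u, |occProb G lam (U.erase w) u - occProb G lam U u| =
      occProb G lam U w * (1 + influence G lam U w) := by
  have key : ∀ u, |occProb G lam (U.erase w) u - occProb G lam U u| =
      occProb G lam U w *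
        ((if u = w then 1 else 0) +
          |occProb G lam (awayFrom G U w) u - occProb G lam (U.erase w) u|) := by
    intro u
    have h : occProb G lam U u = occProb G lam U w *
        (occProb G lam (awayFrom G U w) u + if u = w then 1 else 0) +
        (1 - occProb G lam U w) * occProb G lam (U.erase w) u := by
      rw [← expOn_pin_occ hl]
      exact expOn_split hl hw (occ u)
    have hp := occProb_nonneg (G := G) hl U w
    by_cases hu : u = w
    · subst hu
      simp [occProb_eq_zero (notMem_awayFrom (G := G) U u),
        occProb_eq_zero (notMem_erase u U), abs_of_nonneg hp]
    · rw [if_neg hu, add_zero] at h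
      rw [if_neg hu, zero_add, h, ← abs_of_nonneg hp, ← abs_mul, abs_of_nonneg hp,
        ← abs_neg]
      congr 1
      ring
  rw [sum_congr rfl fun u _ => key u, ← mul_sum, sum_add_distrib]
  simp [influence]

/-- Deleting the vertices of `W` one after the other. -/
lemma exists_occProb_sdiff (hl : 0 < lam) {H : Finset (Fin n)} {K : ℝ} {W : Finset (Fin n)}
    (hWH : W ⊆ H)
    (hK : ∀ H' ⊆ H, ∀ w ∈ W, w ∈ H' →
      √(occProb G lam H' w) * (1 + influence G lam H' w) ≤ K) :
    ∃ q : Fin n → ℝ, (∀ w ∈ W, 0 ≤ q w ∧ q w ≤ lam / (1 + lam)) ∧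
      ∏ w ∈ W, (1 - q w) = partitionOn G lam (H \ W) / partitionOn G lam H ∧
      ∑ u, |occProb G lam (H \ W) u - occProb G lam H u| ≤ K * ∑ w ∈ W, √(q w) := by
  induction W using Finset.induction_on with
  | empty =>
    refine ⟨0, by simp, ?_, by simp⟩
    simp [(partitionOn_pos (G := G) hl H).ne']
  | insert w W hw ih =>
    obtain ⟨q, hq, hprod, hsum⟩ := ih ((subset_insert _ _).trans hWH)
      fun H' hH' x hx => hK H' hH' x (mem_insert_of_mem hx)
    have hwH : w ∈ H \ W := mem_sdiff.2 ⟨hWH (mem_insert_self _ _), hw⟩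
    have hsd : H \ insert w W = (H \ W).erase w := by
      rw [sdiff_insert]
    have hqW : ∀ x ∈ W, Function.update q w (occProb G lam (H \ W) w) x = q x := by
      intro x hx
      rw [Function.update_of_ne]
      rintro rfl
      exact hw hx
    refine ⟨Function.update q w (occProb G lam (H \ W) w), ?_, ?_, ?_⟩
    · intro x hx
      rcases mem_insert.1 hx with rfl | hx
      · rw [Function.update_self]
        exact ⟨occProb_nonneg hl _ _, occProb_le hl hwH⟩
      · rw [hqW x hx]
        exact hq x hx
    · have h1 := (partitionOn_pos (G := G) hl (H \ W)).ne'
      have h2 := (partitionOn_pos (G := G) hl H).ne'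
      rw [prod_insert hw, prod_congr rfl fun x hx => by rw [hqW x hx], hprod,
        Function.update_self, one_sub_occProb hl hwH, hsd]
      field_simp
    · rw [sum_insert hw, sum_congr (s₁ := W) rfl fun x hx => by rw [hqW x hx],
        Function.update_self, hsd, mul_add]
      have hp := occProb_nonneg (G := G) hl (H \ W) w
      have h1 : ∑ u, |occProb G lam ((H \ W).erase w) u - occProb G lam (H \ W) u| ≤
          K * √(occProb G lam (H \ W) w) := by
        rw [sum_abs_occProb_erase_sub hl hwH]
        have := mul_le_mul_of_nonneg_right (hK (H \ W) sdiff_subset w (mem_insert_self _ _) hwH)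
          (Real.sqrt_nonneg (occProb G lam (H \ W) w))
        refine le_trans (le_of_eq ?_) this
        nth_rewrite 1 [← Real.mul_self_sqrt hp]
        ring
      refine le_trans ?_ (add_le_add h1 hsum)
      rw [← sum_add_distrib]
      exact sum_le_sum fun u _ => abs_sub_le _ _ _

end Influence

section Contraction

/-- The extremal inequality at the uniqueness threshold. -/
lemma prod_one_sub_mul_le {ι : Type*} (W : Finset ι) (q : ι → ℝ) (d : ℕ) (hd : 2 ≤ d)
    (hW : W.card ≤ d) (hq : ∀ w ∈ W, 0 ≤ q w ∧ q w ≤ 1) :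
    (∏ w ∈ W, (1 - q w)) * (d * ∑ w ∈ W, q w - 1) ≤ (d - 1) * (((d : ℝ) - 1) / d) ^ d := by
  have hd' : (2 : ℝ) ≤ d := by exact_mod_cast hd
  have hd1 : (0 : ℝ) < d - 1 := by linarith
  set a : ℝ := ((d : ℝ) - 1) / d with ha
  have ha0 : 0 < a := by positivity
  have hainv : a⁻¹ = 1 + 1 / ((d : ℝ) - 1) := by
    rw [ha]; field_simp; ring
  set σ := ∑ w ∈ W, q w with hσ
  have hprod0 : 0 ≤ ∏ w ∈ W, (1 - q w) := prod_nonneg fun w hw => by linarith [(hq w hw).2]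
  have hprod : ∏ w ∈ W, (1 - q w) ≤
      a ^ W.card * Real.exp ((W.card - σ) * a⁻¹ - W.card) := by
    have h1 : ∀ w ∈ W, 1 - q w ≤ a * Real.exp ((1 - q w) * a⁻¹ - 1) := by
      intro w _
      have := Real.add_one_le_exp ((1 - q w) * a⁻¹ - 1)
      have h2 := mul_le_mul_of_nonneg_left this ha0.le
      refine le_trans (le_of_eq ?_) h2
      field_simp
      ring
    refine (prod_le_prod (fun w hw => by linarith [(hq w hw).2]) h1).trans (le_of_eq ?_)
    rw [prod_mul_distrib, prod_const, ← Real.exp_sum, sum_sub_distrib, ← sum_mul,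
      sum_sub_distrib]
    simp [hσ]
  have hlin : d * σ - 1 ≤ (d - 1) * Real.exp ((d * σ - 1) / (d - 1) - 1) := by
    have := Real.add_one_le_exp (((d : ℝ) * σ - 1) / (d - 1) - 1)
    have h2 := mul_le_mul_of_nonneg_left this hd1.le
    refine le_trans (le_of_eq ?_) h2
    field_simp
    ring
  have hpad : Real.exp (-(((d - W.card : ℕ) : ℝ) * (1 / ((d : ℝ) - 1)))) ≤
      a ^ (d - W.card) := by
    rw [Real.exp_neg, Real.exp_nat_mul, ← inv_pow, ← Real.exp_neg]
    refine pow_le_pow_left₀ (Real.exp_pos _).le ?_ _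
    rw [Real.exp_neg, inv_le_comm₀ (Real.exp_pos _) ha0, hainv]
    linarith [Real.add_one_le_exp (1 / ((d : ℝ) - 1))]
  calc (∏ w ∈ W, (1 - q w)) * (d * σ - 1)
      ≤ (∏ w ∈ W, (1 - q w)) * ((d - 1) * Real.exp ((d * σ - 1) / (d - 1) - 1)) :=
        mul_le_mul_of_nonneg_left hlin hprod0
    _ ≤ (a ^ W.card * Real.exp ((W.card - σ) * a⁻¹ - W.card)) *
          ((d - 1) * Real.exp ((d * σ - 1) / (d - 1) - 1)) :=
        mul_le_mul_of_nonneg_right hprod (by positivity)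
    _ = (d - 1) * (a ^ W.card * Real.exp (-(((d - W.card : ℕ) : ℝ) * (1 / ((d : ℝ) - 1))))) := by
        have : Real.exp (-(((d - W.card : ℕ) : ℝ) * (1 / ((d : ℝ) - 1)))) =
            Real.exp ((W.card - σ) * a⁻¹ - W.card) *
              Real.exp ((d * σ - 1) / (d - 1) - 1) := by
          rw [← Real.exp_add, hainv, Nat.cast_sub hW]
          congr 1
          field_simp
          ring
        rw [this]
        ring
    _ ≤ (d - 1) * (a ^ W.card * a ^ (d - W.card)) := by gcongr
    _ = (d - 1) * a ^ d := by rw [← pow_add, Nat.add_sub_cancel' hW]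

/-- Contraction of the hardcore tree recursion below the uniqueness threshold. -/
lemma sqrt_mul_sum_sqrt_le {ι : Type*} (W : Finset ι) (q : ι → ℝ) (d : ℕ) (hd : 2 ≤ d)
    (hW : W.card ≤ d) (hq : ∀ w ∈ W, 0 ≤ q w ∧ q w ≤ 1) {lam δ : ℝ} (hl : 0 < lam)
    (hl9 : lam ≤ 9) (hδ : 0 < δ) (hδ1 : δ < 1)
    (hcrit : lam * ((d - 1) * (((d : ℝ) - 1) / d) ^ d) ≤ 1 - δ) {R : ℝ}
    (hR : R = lam * ∏ w ∈ W, (1 - q w)) :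
    √(R / (1 + R)) * ∑ w ∈ W, √(q w) ≤ 1 - δ / 20 := by
  have hprod0 : 0 ≤ ∏ w ∈ W, (1 - q w) := prod_nonneg fun w hw => by linarith [(hq w hw).2]
  have hprod1 : ∏ w ∈ W, (1 - q w) ≤ 1 :=
    prod_le_one (fun w hw => by linarith [(hq w hw).2]) fun w hw => by linarith [(hq w hw).1]
  have hR0 : 0 ≤ R := by rw [hR]; positivity
  have hR9 : R ≤ 9 := by rw [hR]; nlinarith
  have hσ0 : 0 ≤ ∑ w ∈ W, q w := sum_nonneg fun w hw => (hq w hw).1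
  have hCS : (∑ w ∈ W, √(q w)) ^ 2 ≤ d * ∑ w ∈ W, q w := by
    refine (sq_sum_le_card_mul_sum_sq (s := W) (f := fun w => √(q w))).trans ?_
    rw [sum_congr rfl fun w hw => Real.sq_sqrt (hq w hw).1]
    have : (W.card : ℝ) ≤ d := by exact_mod_cast hW
    gcongr
  have hext : R * (d * ∑ w ∈ W, q w - 1) ≤ 1 - δ := by
    rw [hR, mul_assoc]
    exact (mul_le_mul_of_nonneg_left (prod_one_sub_mul_le W q d hd hW hq) hl.le).trans hcrit
  refine abs_le_of_sq_le_sq' ?_ (by linarith) |>.2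
  rw [mul_pow, Real.sq_sqrt (by positivity), div_mul_eq_mul_div, div_le_iff₀ (by positivity)]
  nlinarith [mul_le_mul_of_nonneg_left hCS hR0, sq_nonneg δ]

end Contraction

section SpectralIndependence

variable {G : SimpleGraph (Fin n)} {lam : ℝ}

lemma erase_sdiff_neighbors (U : Finset (Fin n)) (v : Fin n) :
    U.erase v \ (U.filter fun u => G.Adj v u) = awayFrom G U v := by
  ext u
  simp only [mem_sdiff, mem_erase, mem_filter, mem_awayFrom]
  tauto

lemma occProb_eq_ratio (hl : 0 < lam) {U : Finset (Fin n)} {v : Fin n} (hv : v ∈ U) {R : ℝ}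
    (hR : R = lam * (partitionOn G lam (awayFrom G U v) / partitionOn G lam (U.erase v))) :
    occProb G lam U v = R / (1 + R) := by
  have h1 := partitionOn_pos (G := G) hl (U.erase v)
  have h2 := partitionOn_pos (G := G) hl (awayFrom G U v)
  rw [occProb_eq hv, partitionOn_split hv, hR]
  field_simp

lemma neighbors_subset_erase (U : Finset (Fin n)) (v : Fin n) :
    (U.filter fun u => G.Adj v u) ⊆ U.erase v := by
  intro u hu
  rw [mem_filter] at hu
  exact mem_erase.2 ⟨hu.2.ne', hu.1⟩

lemma card_neighbors_lt {H : Finset (Fin n)} {v w : Fin n} (hadj : G.Adj w v) (hv : v ∉ H) :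
    (H.filter fun u => G.Adj w u).card < (univ.filter fun u => G.Adj w u).card :=
  card_lt_card <| (ssubset_iff_of_subset (filter_subset_filter _ (subset_univ _))).2
    ⟨v, by simp [hadj], fun hvm => hv (mem_filter.1 hvm).1⟩

/-- The total influence of a vertex with at most `d` neighbours, weighted by the square root of
its occupation probability, is bounded. -/
lemma sqrt_occProb_mul_influence_le {d : ℕ} (hd : 2 ≤ d)
    (hdeg : ∀ v, (univ.filter fun u => G.Adj v u).card ≤ d + 1)
    (hl : 0 < lam) (hl9 : lam ≤ 9) {δ : ℝ} (hδ : 0 < δ) (hδ1 : δ < 1)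
    (hcrit : lam * ((d - 1) * (((d : ℝ) - 1) / d) ^ d) ≤ 1 - δ)
    (U : Finset (Fin n)) {v : Fin n} (hv : v ∈ U)
    (hUv : (U.filter fun u => G.Adj v u).card ≤ d) :
    √(occProb G lam U v) * (1 + influence G lam U v) ≤ √(lam / (1 + lam)) * (20 / δ) := by
  induction U using Finset.strongInduction generalizing v with
  | H U ih =>
    set K := √(lam / (1 + lam)) * (20 / δ) with hK
    obtain ⟨q, hq, hprod, hsum⟩ := exists_occProb_sdiff (G := G) hl (H := U.erase v) (K := K)
      (neighbors_subset_erase U v) (by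
        intro H' hH' w hw hwH'
        refine ih H' (hH'.trans_ssubset (erase_ssubset hv)) hwH' ?_
        exact Nat.le_of_lt_succ <| (card_neighbors_lt (mem_filter.1 hw).2.symm
          fun h => notMem_erase v U (hH' h)).trans_le (hdeg w))
    rw [erase_sdiff_neighbors] at hprod hsum
    have hlam1 : lam / (1 + lam) ≤ 1 := by rw [div_le_one (by positivity)]; linarith
    have hcon := sqrt_mul_sum_sqrt_le _ q d hd hUv
      (fun w hw => ⟨(hq w hw).1, (hq w hw).2.trans hlam1⟩) hl hl9 hδ hδ1 hcrit rfl
    rw [hprod, ← occProb_eq_ratio hl hv rfl] at hcon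
    have hp := Real.sqrt_le_sqrt (occProb_le (G := G) hl hv)
    have hp0 := Real.sqrt_nonneg (occProb G lam U v)
    have hK0 : 0 ≤ K := by positivity
    have hKδ : K * (δ / 20) = √(lam / (1 + lam)) := by rw [hK]; field_simp
    have h1 := mul_le_mul_of_nonneg_left hsum hp0
    have h2 := mul_le_mul_of_nonneg_left hcon hK0
    unfold influence
    nlinarith

lemma influence_le {d : ℕ} (hd : 2 ≤ d)
    (hdeg : ∀ v, (univ.filter fun u => G.Adj v u).card ≤ d + 1)
    (hl : 0 < lam) (hl27 : lam * (d + 1) ≤ 27) {δ : ℝ} (hδ : 0 < δ) (hδ1 : δ < 1)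
    (hcrit : lam * ((d - 1) * (((d : ℝ) - 1) / d) ^ d) ≤ 1 - δ)
    (U : Finset (Fin n)) (v : Fin n) :
    1 + influence G lam U v ≤ 541 / δ := by
  have hd' : (2 : ℝ) ≤ d := by exact_mod_cast hd
  have hl9 : lam ≤ 9 := by nlinarith
  set K := √(lam / (1 + lam)) * (20 / δ) with hK
  have hK0 : 0 ≤ K := by positivity
  obtain ⟨q, hq, -, hsum⟩ := exists_occProb_sdiff (G := G) hl (H := U.erase v) (K := K)
    (neighbors_subset_erase U v) (by
      intro H' hH' w hw hwH'
      refine sqrt_occProb_mul_influence_le hd hdeg hl hl9 hδ hδ1 hcrit H' hwH' ?_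
      exact Nat.le_of_lt_succ <| (card_neighbors_lt (mem_filter.1 hw).2.symm
        fun h => notMem_erase v U (hH' h)).trans_le (hdeg w))
  rw [erase_sdiff_neighbors] at hsum
  have hcard : ((U.filter fun u => G.Adj v u).card : ℝ) ≤ d + 1 := by
    have := (card_le_card (filter_subset_filter (fun u => G.Adj v u) (subset_univ U))).trans
      (hdeg v)
    exact_mod_cast this
  have hs : ∑ w ∈ U.filter (fun u => G.Adj v u), √(q w) ≤ (d + 1) * √(lam / (1 + lam)) := by
    refine (sum_le_card_nsmul _ _ _ fun w hw => Real.sqrt_le_sqrt (hq w hw).2).trans ?_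
    rw [nsmul_eq_mul]
    gcongr
  have hfrac : (d + 1) * (lam / (1 + lam)) ≤ 27 := by
    rw [mul_div_assoc', div_le_iff₀ (by positivity)]
    nlinarith
  calc 1 + influence G lam U v
      ≤ 1 + K * ((d + 1) * √(lam / (1 + lam))) := by
        have := mul_le_mul_of_nonneg_left hs hK0
        unfold influence
        linarith
    _ = 1 + (20 / δ) * ((d + 1) * (√(lam / (1 + lam)) * √(lam / (1 + lam)))) := by
        rw [hK]; ring
    _ ≤ 1 / δ + (20 / δ) * 27 := by
        rw [Real.mul_self_sqrt (by positivity)]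
        have : 1 ≤ 1 / δ := by rw [le_div_iff₀ hδ]; linarith
        gcongr
    _ = 541 / δ := by ring

/-- Spectral independence: revealing a uniformly random vertex explains only a bounded multiple
of `1 / |U|` of the variance. -/
lemma sum_explained_variance_le (hl : 0 < lam) {η : ℝ} (hη : 0 < η)
    (U : Finset (Fin n)) (hinf : ∀ v ∈ U, 1 + influence G lam U v ≤ η)
    (f : Finset (Fin n) → ℝ) :
    ∑ v ∈ U, occProb G lam U v * (1 - occProb G lam U v) *
        (expOn G lam (awayFrom G U v) (pin v f) - expOn G lam (U.erase v) f) ^ 2 ≤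
      η * covOn G lam U f f := by
  set a : Fin n → ℝ := fun v =>
    expOn G lam (awayFrom G U v) (pin v f) - expOn G lam (U.erase v) f with ha
  set s : Fin n → ℝ := fun v => occProb G lam U v * (1 - occProb G lam U v) with hs
  set Q := ∑ v ∈ U, s v * a v ^ 2 with hQ
  change Q ≤ _
  have hs0 : ∀ v ∈ U, 0 ≤ s v := fun v hv =>
    mul_nonneg (occProb_nonneg hl U v) (by linarith [occProb_le_one (G := G) hl hv])
  set g : Finset (Fin n) → ℝ := fun S => ∑ v ∈ U, a v * occ v S with hg
  have hcross : covOn G lam U g f = Q := by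
    rw [hg, covOn_sum_left]
    refine sum_congr rfl fun v hv => ?_
    rw [covOn_const_mul_left, covOn_occ hl hv]
    change a v * (s v * a v) = _
    ring
  have hrow : ∀ v ∈ U, ∑ u ∈ U, |covOn G lam U (occ v) (occ u)| ≤ η * s v := by
    intro v hv
    have h1 : ∀ u, |covOn G lam U (occ v) (occ u)| ≤ s v * ((if u = v then 1 else 0) +
        |occProb G lam (awayFrom G U v) u - occProb G lam (U.erase v) u|) := by
      intro u
      rw [covOn_occ hl hv, expOn_pin_occ hl, abs_mul, abs_of_nonneg (hs0 v hv)]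
      refine mul_le_mul_of_nonneg_left ?_ (hs0 v hv)
      change |_ - occProb G lam (U.erase v) u| ≤ _
      have h2 : |(if u = v then (1 : ℝ) else 0)| = if u = v then 1 else 0 := by
        split_ifs <;> simp
      rw [add_sub_right_comm, add_comm (ite _ _ _)]
      exact (abs_add_le _ _).trans (by rw [h2])
    calc ∑ u ∈ U, |covOn G lam U (occ v) (occ u)|
        ≤ ∑ u, |covOn G lam U (occ v) (occ u)| :=
          sum_le_sum_of_subset_of_nonneg (subset_univ U) fun _ _ _ => abs_nonneg _
      _ ≤ ∑ u, s v * ((if u = v then 1 else 0) +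
            |occProb G lam (awayFrom G U v) u - occProb G lam (U.erase v) u|) :=
          sum_le_sum fun u _ => h1 u
      _ = s v * (1 + influence G lam U v) := by
          rw [← mul_sum, sum_add_distrib]; simp [influence]
      _ ≤ η * s v := by
          rw [mul_comm η]
          exact mul_le_mul_of_nonneg_left (hinf v hv) (hs0 v hv)
  have hvar : covOn G lam U g g ≤ η * Q := by
    have hexp : covOn G lam U g g =
        ∑ v ∈ U, ∑ u ∈ U, a v * a u * covOn G lam U (occ v) (occ u) := by
      conv_lhs => rw [hg, covOn_sum_left]
      refine sum_congr rfl fun v _ => ?_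
      rw [covOn_const_mul_left, covOn_comm, covOn_sum_left, mul_sum]
      refine sum_congr rfl fun u _ => ?_
      rw [covOn_const_mul_left, covOn_comm]
      ring
    have hterm : ∀ v u, a v * a u * covOn G lam U (occ v) (occ u) ≤
        a v ^ 2 / 2 * |covOn G lam U (occ v) (occ u)| +
          a u ^ 2 / 2 * |covOn G lam U (occ u) (occ v)| := by
      intro v u
      rw [covOn_comm U (occ u)]
      rcases abs_cases (covOn G lam U (occ v) (occ u)) with ⟨h, h'⟩ | ⟨h, h'⟩ <;> rw [h]
      · nlinarith [mul_nonneg h' (sq_nonneg (a v - a u))]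
      · nlinarith [mul_nonneg (neg_pos.2 h').le (sq_nonneg (a v + a u))]
    have hsq : ∑ v ∈ U, ∑ u ∈ U, a v ^ 2 / 2 * |covOn G lam U (occ v) (occ u)| ≤ η * Q / 2 := by
      rw [hQ, mul_sum, sum_div]
      refine sum_le_sum fun v hv => ?_
      rw [← mul_sum]
      have := mul_le_mul_of_nonneg_left (hrow v hv) (show 0 ≤ a v ^ 2 / 2 by positivity)
      linarith
    rw [hexp]
    refine (sum_le_sum fun v _ => sum_le_sum fun u _ => hterm v u).trans ?_
    simp only [sum_add_distrib]
    rw [sum_comm (f := fun v u => a u ^ 2 / 2 * |covOn G lam U (occ u) (occ v)|)]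
    linarith
  have hpos := covOn_self_nonneg (G := G) hl U (fun S => f S + (-(1 / η)) * g S)
  rw [covOn_add_left, covOn_comm, covOn_add_left, covOn_const_mul_left, covOn_const_mul_left,
    covOn_comm U g (fun S => f S + (-(1 / η)) * g S), covOn_add_left, covOn_const_mul_left,
    covOn_comm U f g, hcross] at hpos
  have h1 : (1 / η) ^ 2 * covOn G lam U g g ≤ Q / η := by
    have := mul_le_mul_of_nonneg_left hvar (show 0 ≤ (1 / η) ^ 2 by positivity)
    refine this.trans (le_of_eq ?_)
    field_simp
  have h2 : Q / η ≤ covOn G lam U f f := by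
    have : 1 / η * Q = Q / η := by ring
    nlinarith
  rwa [div_le_iff₀ hη, mul_comm] at h2

end SpectralIndependence

section LocalToGlobal

variable {G : SimpleGraph (Fin n)} {lam : ℝ}

lemma localGrad_nonneg (hl : 0 < lam) (j : Fin n) (f : Finset (Fin n) → ℝ)
    (S : Finset (Fin n)) : 0 ≤ localGrad G lam j f S := by
  unfold localGrad; split_ifs <;> positivity

lemma expOn_localGrad_nonneg (hl : 0 < lam) (U : Finset (Fin n)) (j : Fin n)
    (f : Finset (Fin n) → ℝ) : 0 ≤ expOn G lam U (localGrad G lam j f) :=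
  expOn_nonneg hl (localGrad_nonneg hl j f)

lemma gradOn_nonneg (hl : 0 < lam) (U : Finset (Fin n)) (f : Finset (Fin n) → ℝ) :
    0 ≤ gradOn G lam U f :=
  sum_nonneg fun j _ => expOn_localGrad_nonneg hl U j f

lemma gradOn_split_le (hl : 0 < lam) {U : Finset (Fin n)} {v : Fin n} (hv : v ∈ U)
    (f : Finset (Fin n) → ℝ) :
    occProb G lam U v * gradOn G lam (awayFrom G U v) (pin v f) +
        (1 - occProb G lam U v) * gradOn G lam (U.erase v) f ≤
      ∑ j ∈ U.erase v, expOn G lam U (localGrad G lam j f) := by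
  rw [sum_congr rfl fun j _ => expOn_split hl hv (localGrad G lam j f), sum_add_distrib,
    ← mul_sum, ← mul_sum, gradOn, gradOn]
  refine add_le_add_left (mul_le_mul_of_nonneg_left ?_ (occProb_nonneg hl U v)) _
  refine le_trans (le_of_eq ?_) (sum_le_sum_of_subset_of_nonneg
    (awayFrom_subset_erase (G := G) U v) fun j _ _ => expOn_nonneg hl fun S => localGrad_nonneg hl j f _)
  refine sum_congr rfl fun j hj => expOn_congr fun S hS => ?_
  have hjv : j ≠ v := (mem_awayFrom.1 hj).2.1
  have hind : IsIndepSet G (insert v (insert j S)) ↔ IsIndepSet G (insert j S) :=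
    isIndepSet_insert_of_subset_awayFrom (insert_subset hj hS)
  simp only [localGrad, pin, insert_comm j v S, hind, mem_insert, hjv, false_or]

/-- One step of the local-to-global argument. -/
lemma covOn_self_le_of_pinned (hl : 0 < lam) {η C : ℝ} (hη : 0 < η) (hC : 0 ≤ C)
    (U : Finset (Fin n))
    (hinf : ∀ v ∈ U, 1 + influence G lam U v ≤ η)
    (ih : ∀ U' : Finset (Fin n), U'.card < U.card →
      ∀ f, covOn G lam U' f f ≤ C * gradOn G lam U' f)
    (f : Finset (Fin n) → ℝ) :
    (U.card - η) * covOn G lam U f f ≤ C * (U.card - 1) * gradOn G lam U f := by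
  have hSI := sum_explained_variance_le hl hη U hinf f
  have hstep : ∀ v ∈ U, covOn G lam U f f ≤
      C * (gradOn G lam U f - expOn G lam U (localGrad G lam v f)) +
      occProb G lam U v * (1 - occProb G lam U v) *
        (expOn G lam (awayFrom G U v) (pin v f) - expOn G lam (U.erase v) f) ^ 2 := by
    intro v hv
    rw [covOn_self_split hl hv f]
    have hcard : (U.erase v).card < U.card := card_erase_lt_of_mem hv
    have h1 := mul_le_mul_of_nonneg_left (ih (awayFrom G U v)
      ((card_le_card (awayFrom_subset_erase U v)).trans_lt hcard) (pin v f))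
      (occProb_nonneg (G := G) hl U v)
    have h2 := mul_le_mul_of_nonneg_left (ih (U.erase v) hcard f)
      (sub_nonneg.2 (occProb_le_one (G := G) hl hv))
    have h3 := mul_le_mul_of_nonneg_left (gradOn_split_le (G := G) hl hv f) hC
    have h4 : ∑ j ∈ U.erase v, expOn G lam U (localGrad G lam j f) =
        gradOn G lam U f - expOn G lam U (localGrad G lam v f) := by
      rw [gradOn, ← add_sum_erase _ _ hv]; ring
    rw [h4] at h3
    linarith
  have := sum_le_sum hstep
  rw [sum_const, nsmul_eq_mul, sum_add_distrib, ← mul_sum, sum_sub_distrib, sum_const,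
    nsmul_eq_mul] at this
  change _ ≤ C * (_ - gradOn G lam U f) + _ at this
  linarith

lemma expOn_localGrad_self (hl : 0 < lam) {U : Finset (Fin n)} {v : Fin n} (hv : v ∈ U)
    (f : Finset (Fin n) → ℝ) :
    (1 + lam) * expOn G lam U (localGrad G lam v f) =
      occProb G lam U v * expOn G lam (awayFrom G U v) (fun S => (pin v f S - f S) ^ 2) := by
  have h1 := (partitionOn_pos (G := G) hl U).ne'
  have h3 := (partitionOn_pos (G := G) hl (awayFrom G U v)).ne'
  have h4 : (1 + lam) ≠ 0 := by positivity
  rw [occProb_eq hv, expOn, sum_hcWeight_split hv, expOn]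
  have hpin : ∀ S, pin v (localGrad G lam v f) S = 0 := fun S => by simp [pin, localGrad]
  have hsum : ∑ S ∈ (U.erase v).powerset, hcWeight G lam S * localGrad G lam v f S =
      lam / (1 + lam) * ∑ S ∈ (awayFrom G U v).powerset,
        hcWeight G lam S * (pin v f S - f S) ^ 2 := by
    rw [mul_sum]
    symm
    rw [← sum_subset (powerset_mono.2 (awayFrom_subset_erase (G := G) U v))]
    · refine sum_congr rfl fun S hS => ?_
      rw [mem_powerset] at hS
      have hvS : v ∉ S := fun h => notMem_awayFrom U v (hS h)
      simp only [hcWeight, localGrad, isIndepSet_insert_of_subset_awayFrom hS, pin, hvS,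
        not_false_eq_true, true_and]
      split_ifs <;> ring
    · intro S hS hS'
      rw [mem_powerset] at hS hS'
      simp [localGrad, not_isIndepSet_insert hS hS']
  rw [hsum]
  simp only [hpin, mul_zero, sum_const_zero, add_zero]
  field_simp

/-- A crude one-vertex variance bound, valid for every graph. -/
lemma covOn_self_le_crude (hl : 0 < lam) {U : Finset (Fin n)} {v : Fin n} (hv : v ∈ U)
    (f : Finset (Fin n) → ℝ) :
    covOn G lam U f f ≤ (1 + 2 * lam) *
        (occProb G lam U v * covOn G lam (awayFrom G U v) (pin v f) (pin v f) +
          (1 - occProb G lam U v) * covOn G lam (U.erase v) f f) +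
      2 * (1 + lam) * expOn G lam U (localGrad G lam v f) := by
  set p := occProb G lam U v with hp
  set a := expOn G lam (awayFrom G U v) (pin v f) with ha
  set b := expOn G lam (awayFrom G U v) f with hb
  set c := expOn G lam (U.erase v) f with hc
  have hp0 : 0 ≤ p := occProb_nonneg hl U v
  have hp1 : p ≤ 1 := occProb_le_one hl hv
  have hVA := covOn_self_nonneg (G := G) hl (awayFrom G U v) (pin v f)
  have hVB := covOn_self_nonneg (G := G) hl (U.erase v) f
  have hab : p * (1 - p) * (a - b) ^ 2 ≤ (1 + lam) * expOn G lam U (localGrad G lam v f) := by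
    rw [expOn_localGrad_self hl hv]
    have h1 := expOn_sub_sq (G := G) hl (awayFrom G U v) (fun S => pin v f S - f S) 0
    have h2 := covOn_self_nonneg (G := G) hl (awayFrom G U v) (fun S => pin v f S - f S)
    have h3 : expOn G lam (awayFrom G U v) (fun S => pin v f S - f S) = a - b := by
      have := expOn_add (G := G) (lam := lam) (awayFrom G U v) (pin v f) (fun S => -1 * f S)
      rw [expOn_const_mul] at this
      rw [ha, hb, sub_eq_add_neg, ← neg_one_mul, ← this]
      congr 1
      funext S
      ring
    simp only [sub_zero, h3] at h1
    rw [h1]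
    have h4 : p * (1 - p) ≤ p := by nlinarith
    nlinarith [mul_le_mul_of_nonneg_right h4 (sq_nonneg (a - b)), mul_nonneg hp0 h2]
  have hbc : p * (1 - p) * (b - c) ^ 2 ≤ lam * ((1 - p) * covOn G lam (U.erase v) f f) := by
    have hZU := partitionOn_pos (G := G) hl U
    have hZB := partitionOn_pos (G := G) hl (U.erase v)
    have hZA := partitionOn_pos (G := G) hl (awayFrom G U v)
    have h1 : partitionOn G lam (awayFrom G U v) * (b - c) ^ 2 ≤
        partitionOn G lam (U.erase v) * covOn G lam (U.erase v) f f := by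
      have hA := expOn_sub_sq (G := G) hl (awayFrom G U v) f c
      have hB := expOn_sub_sq (G := G) hl (U.erase v) f c
      rw [← hc, sub_self, zero_pow two_ne_zero, add_zero] at hB
      have hV := covOn_self_nonneg (G := G) hl (awayFrom G U v) f
      have hle : partitionOn G lam (awayFrom G U v) *
            expOn G lam (awayFrom G U v) (fun S => (f S - c) ^ 2) ≤
          partitionOn G lam (U.erase v) *
            expOn G lam (U.erase v) (fun S => (f S - c) ^ 2) := by
        rw [expOn, expOn, mul_div_cancel₀ _ hZA.ne', mul_div_cancel₀ _ hZB.ne']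
        exact sum_le_sum_of_subset_of_nonneg (powerset_mono.2 (awayFrom_subset_erase U v))
          fun S _ _ => mul_nonneg (hcWeight_nonneg hl S) (sq_nonneg _)
      rw [hA, hB] at hle
      refine le_trans ?_ hle
      exact mul_le_mul_of_nonneg_left (by linarith) hZA.le
    have h2 : p * (b - c) ^ 2 ≤ lam * ((1 - p) * covOn G lam (U.erase v) f f) := by
      rw [hp, one_sub_occProb hl hv, occProb_eq hv, div_mul_eq_mul_div, div_mul_eq_mul_div,
        mul_div_assoc', div_le_div_iff_of_pos_right hZU, mul_assoc]
      exact mul_le_mul_of_nonneg_left h1 hl.le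
    have h3 : p * (1 - p) ≤ p := by nlinarith
    exact (mul_le_mul_of_nonneg_right h3 (sq_nonneg _)).trans h2
  have hac : p * (1 - p) * (a - c) ^ 2 ≤
      2 * (p * (1 - p) * (a - b) ^ 2) + 2 * (p * (1 - p) * (b - c) ^ 2) := by
    have : 0 ≤ p * (1 - p) := mul_nonneg hp0 (by linarith)
    nlinarith [mul_nonneg this (sq_nonneg (a - b - (b - c)))]
  rw [covOn_self_split hl hv f]
  have : 0 ≤ lam * (p * covOn G lam (awayFrom G U v) (pin v f) (pin v f)) := by positivity
  linarith

/-- A Poincaré inequality with exponential constant, valid for every graph. -/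
lemma covOn_self_le_exponential (hl : 0 < lam) (U : Finset (Fin n)) (f : Finset (Fin n) → ℝ) :
    covOn G lam U f f ≤ 2 * (1 + lam) * (1 + 2 * lam) ^ U.card * gradOn G lam U f := by
  induction hk : U.card using Nat.strong_induction_on generalizing U f with
  | _ k ih =>
    rcases U.eq_empty_or_nonempty with rfl | ⟨v, hv⟩
    · subst hk
      simp [covOn, expOn, gradOn, partitionOn, hcWeight, IsIndepSet]
    obtain ⟨m, rfl⟩ : ∃ m, k = m + 1 := ⟨k - 1, by have := card_pos.2 ⟨v, hv⟩; omega⟩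
    set C := 2 * (1 + lam) * (1 + 2 * lam) ^ m with hC
    have hC0 : 0 ≤ C := by positivity
    have hpow : ∀ {i}, i ≤ m → 2 * (1 + lam) * (1 + 2 * lam) ^ i ≤ C := by
      intro i hi
      rw [hC]
      gcongr
      linarith
    have hcardB : (U.erase v).card = m := by rw [card_erase_of_mem hv, hk]; rfl
    have hcardA : (awayFrom G U v).card ≤ m :=
      hcardB ▸ card_le_card (awayFrom_subset_erase U v)
    have hA := (ih _ (Nat.lt_succ_of_le hcardA) (awayFrom G U v) (pin v f) rfl).trans
      (mul_le_mul_of_nonneg_right (hpow hcardA) (gradOn_nonneg hl _ _))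
    have hB := ih m (Nat.lt_succ_self m) (U.erase v) f hcardB
    have h1 := mul_le_mul_of_nonneg_left hA (occProb_nonneg (G := G) hl U v)
    have h2 := mul_le_mul_of_nonneg_left hB (sub_nonneg.2 (occProb_le_one (G := G) hl hv))
    have h3 := mul_le_mul_of_nonneg_left (gradOn_split_le (G := G) hl hv f) hC0
    have h4 := covOn_self_le_crude (G := G) hl hv f
    have h5 := expOn_localGrad_nonneg (G := G) hl U v f
    have h6 : gradOn G lam U f = expOn G lam U (localGrad G lam v f) +
        ∑ j ∈ U.erase v, expOn G lam U (localGrad G lam j f) := by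
      rw [gradOn, ← add_sum_erase _ _ hv]
    have h7 : 2 * (1 + lam) ≤ (1 + 2 * lam) * C := by
      have h8 : 1 ≤ (1 + 2 * lam) ^ (m + 1) := one_le_pow₀ (by linarith)
      have h9 : (1 + 2 * lam) * C = 2 * (1 + lam) * (1 + 2 * lam) ^ (m + 1) := by
        rw [hC]; ring
      rw [h9]
      exact le_mul_of_one_le_right (by positivity) h8
    have h10 : 2 * (1 + lam) * (1 + 2 * lam) ^ (m + 1) = (1 + 2 * lam) * C := by
      rw [hC]; ring
    rw [h10, h6]
    have h11 := mul_le_mul_of_nonneg_left ((add_le_add h1 h2).trans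
      (le_trans (le_of_eq (by rw [← hC]; ring)) h3)) (show 0 ≤ 1 + 2 * lam by positivity)
    have h12 := mul_le_mul_of_nonneg_right h7 h5
    linarith

/-- The recursion for the Poincaré constants is solved by a power. -/
lemma pow_recursion {h k : ℕ} (hk : 2 * h ≤ k) :
    (k : ℝ) ^ (2 * h) * k ≤ ((k + 1 : ℕ) : ℝ) ^ (2 * h) * ((k + 1 : ℕ) - h) := by
  have hk' : 2 * (h : ℝ) ≤ k := by exact_mod_cast hk
  have hh : (0 : ℝ) ≤ h := by positivity
  push_cast
  set x : ℝ := k + 1 with hx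
  have hx1 : 1 ≤ x := by linarith
  have hbern : 1 + ((2 * h + 1 : ℕ) : ℝ) * (1 / x) ≤ (1 + 1 / x) ^ (2 * h + 1) :=
    one_add_mul_le_pow (le_trans (by norm_num) (show 0 ≤ 1 / x by positivity)) _
  have hkx : (k : ℝ) * (1 + 1 / x) ≤ x := by
    have : (k : ℝ) = x - 1 := by linarith
    rw [this, mul_add, mul_one_div, sub_div, div_self (by linarith)]
    have : 0 ≤ 1 / x := by positivity
    linarith
  have h1 : (k : ℝ) ^ (2 * h + 1) * (1 + ((2 * h + 1 : ℕ) : ℝ) * (1 / x)) ≤ x ^ (2 * h + 1) := by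
    refine (mul_le_mul_of_nonneg_left hbern (by positivity)).trans ?_
    rw [← mul_pow]
    exact pow_le_pow_left₀ (by positivity) hkx _
  have h2 : x ≤ (1 + ((2 * h + 1 : ℕ) : ℝ) * (1 / x)) * (x - h) := by
    push_cast
    have hx0 : 0 < x := by linarith
    rw [← sub_nonneg]
    have : (1 + (2 * (h : ℝ) + 1) * (1 / x)) * (x - h) - x =
        ((h + 1) * x - (2 * h + 1) * h) / x := by
      field_simp
      ring
    rw [this]
    refine div_nonneg ?_ hx0.le
    nlinarith
  have hxh : 0 ≤ x - h := by linarith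
  have h3 := mul_le_mul_of_nonneg_right h1 hxh
  have h4 := mul_le_mul_of_nonneg_left h2 (show 0 ≤ (k : ℝ) ^ (2 * h + 1) by positivity)
  rw [← pow_succ]
  have h5 : (k : ℝ) ^ (2 * h + 1) * x ≤ x ^ (2 * h) * (x - h) * x := by
    calc _ ≤ _ := h4
      _ = _ := (mul_assoc _ _ _).symm
      _ ≤ _ := h3
      _ = _ := by ring
  exact le_of_mul_le_mul_right h5 (by linarith)

/-- The Poincaré inequality with polynomial constant under bounded total influence. -/
lemma covOn_self_le_polynomial (hl : 0 < lam) {h : ℕ} (hh : 0 < h)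
    (hinf : ∀ (U : Finset (Fin n)) v, 1 + influence G lam U v ≤ h) (k : ℕ) (hk : 1 ≤ k)
    (U : Finset (Fin n)) (hU : U.card ≤ k) (f : Finset (Fin n) → ℝ) :
    covOn G lam U f f ≤
      2 * (1 + lam) * (1 + 2 * lam) ^ (2 * h) * (k : ℝ) ^ (2 * h) * gradOn G lam U f := by
  set M := 2 * (1 + lam) * (1 + 2 * lam) ^ (2 * h) with hM
  have hM0 : 0 ≤ M := by positivity
  have hh' : (0 : ℝ) < h := by exact_mod_cast hh
  have hsmall : ∀ m : ℕ, 1 ≤ m → m ≤ 2 * h → ∀ U : Finset (Fin n), U.card ≤ m →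
      ∀ f, covOn G lam U f f ≤ M * (m : ℝ) ^ (2 * h) * gradOn G lam U f := by
    intro m hm1 hm U hU f
    refine (covOn_self_le_exponential hl U f).trans
      (mul_le_mul_of_nonneg_right ?_ (gradOn_nonneg hl U f))
    have h1 : 2 * (1 + lam) * (1 + 2 * lam) ^ U.card ≤ M := by
      rw [hM]
      gcongr
      · linarith
      · omega
    have h2 : (1 : ℝ) ≤ (m : ℝ) ^ (2 * h) := one_le_pow₀ (by exact_mod_cast hm1)
    exact h1.trans (le_mul_of_one_le_right hM0 h2)
  induction k, hk using Nat.le_induction generalizing U f with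
  | base => exact hsmall 1 le_rfl (by omega) U hU f
  | succ k hk1 ih =>
    rcases Nat.lt_or_ge k (2 * h) with hk | hk
    · exact hsmall (k + 1) (by omega) hk U hU f
    have hg := gradOn_nonneg (G := G) hl U f
    rcases Nat.lt_or_ge U.card (k + 1) with hlt | hge
    · refine (ih U (by omega) f).trans (mul_le_mul_of_nonneg_right ?_ hg)
      gcongr
      omega
    · have hcard : U.card = k + 1 := le_antisymm hU hge
      have hk' : 2 * (h : ℝ) ≤ k := by exact_mod_cast hk
      have hstep := covOn_self_le_of_pinned hl hh' (C := M * (k : ℝ) ^ (2 * h)) (by positivity) U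
        (fun v _ => hinf U v) (fun U' hU' f => ih U' (by omega) f) f
      rw [hcard] at hstep
      have hpos : (0 : ℝ) < ((k + 1 : ℕ) : ℝ) - h := by push_cast; linarith
      have hrec := mul_le_mul_of_nonneg_left (pow_recursion hk) (mul_nonneg hM0 hg)
      refine le_of_mul_le_mul_left ?_ hpos
      refine hstep.trans ?_
      have hcast : ((k + 1 : ℕ) : ℝ) - 1 = k := by push_cast; ring
      rw [hcast]
      linarith

end LocalToGlobal

section Conversion

variable {G : SimpleGraph (Fin n)} {lam : ℝ}

lemma hardcore_eq (S : Finset (Fin n)) :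
    hardcore G lam S = hcWeight G lam S / partitionOn G lam univ := by
  have : hardcoreZ G lam = partitionOn G lam univ := by
    simp [hardcoreZ, partitionOn, hcWeight]
  unfold hardcore hcWeight
  rw [this]
  split_ifs <;> simp

lemma sum_hardcore_mul (f : Finset (Fin n) → ℝ) :
    ∑ S, hardcore G lam S * f S = expOn G lam univ f := by
  simp only [hardcore_eq, expOn, powerset_univ, sum_div, div_mul_eq_mul_div]

lemma varianceE_hardcore (f : Finset (Fin n) → ℝ) :
    varianceE (hardcore G lam) f = covOn G lam univ f f := by
  simp only [varianceE, sum_hardcore_mul, covOn, pow_two]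

lemma hardcore_flow (hl : 0 < lam) {i : Fin n} {S : Finset (Fin n)} (hi : i ∉ S) (x : ℝ) :
    hardcore G lam S * (hardcore G lam (insert i S) /
      (hardcore G lam S + hardcore G lam (insert i S)) * x) =
      hardcore G lam S *
        (if IsIndepSet G (insert i S) then lam / (1 + lam) * x else 0) := by
  have hZ := partitionOn_pos (G := G) hl univ
  split_ifs with h
  · have hS : IsIndepSet G S := h.mono (subset_insert _ _)
    simp only [hardcore_eq, hcWeight, if_pos h, if_pos hS, card_insert_of_notMem hi]
    field_simp
    ring
  · simp [hardcore_eq, hcWeight, h]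

lemma dirichletForm_hardcore (hl : 0 < lam) (f : Finset (Fin n) → ℝ) :
    dirichletForm (hardcore G lam) f = 1 / n * gradOn G lam univ f := by
  set μ := hardcore G lam with hμ
  have hsite : ∀ i : Fin n, ∑ S, μ S *
      (μ (S.erase i) / (μ (S.erase i) + μ (insert i S)) * (f S - f (S.erase i)) ^ 2 +
        μ (insert i S) / (μ (S.erase i) + μ (insert i S)) * (f S - f (insert i S)) ^ 2) =
      2 * ∑ S, μ S * localGrad G lam i f S := by
    intro i
    have huniv : (univ : Finset (Finset (Fin n))) = (insert i (univ.erase i)).powerset := by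
      rw [insert_erase (mem_univ i), powerset_univ]
    rw [huniv, sum_powerset_insert (notMem_erase i univ),
      sum_powerset_insert (notMem_erase i univ), ← sum_add_distrib, ← sum_add_distrib, mul_sum]
    refine sum_congr rfl fun S hS => ?_
    have hi : i ∉ S := fun h => notMem_erase i univ (mem_powerset.1 hS h)
    have hflow := hardcore_flow (G := G) hl hi ((f (insert i S) - f S) ^ 2)
    simp only [erase_eq_of_notMem hi, erase_insert hi, insert_idem, sub_self, localGrad,
      mem_insert_self, hi, not_true_eq_false, not_false_eq_true, false_and, true_and, if_false]
    rw [← hμ] at hflow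
    rw [← hflow]
    ring
  have hT : ∀ S, ∑ T, μ S * glauber μ S T * (f S - f T) ^ 2 = 1 / n * ∑ i, μ S *
      (μ (S.erase i) / (μ (S.erase i) + μ (insert i S)) * (f S - f (S.erase i)) ^ 2 +
        μ (insert i S) / (μ (S.erase i) + μ (insert i S)) * (f S - f (insert i S)) ^ 2) := by
    intro S
    simp only [glauber, mul_sum, sum_mul]
    rw [sum_comm]
    refine sum_congr rfl fun i _ => ?_
    simp only [mul_add, add_mul, sum_add_distrib, mul_ite, ite_mul, mul_zero, zero_mul,
      sum_ite_eq', mem_univ, if_true]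
    ring
  rw [dirichletForm, sum_congr rfl fun S _ => hT S, ← mul_sum, sum_comm,
    sum_congr rfl fun i _ => hsite i, ← mul_sum, gradOn]
  simp only [sum_hardcore_mul, hμ]
  ring

end Conversion

section Threshold

lemma lamC_succ (d : ℕ) : lamC (d + 1) = (d : ℝ) ^ d / ((d : ℝ) - 1) ^ (d + 1) := by
  rw [lamC, Nat.add_sub_cancel]
  push_cast
  congr 2 <;> ring

lemma lamC_pos {d : ℕ} (hd : 2 ≤ d) : 0 < lamC (d + 1) := by
  have hd' : (2 : ℝ) ≤ d := by exact_mod_cast hd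
  have : (0 : ℝ) < d - 1 := by linarith
  rw [lamC_succ]
  positivity

lemma lamC_mul_critical {d : ℕ} (hd : 2 ≤ d) :
    lamC (d + 1) * ((d - 1) * (((d : ℝ) - 1) / d) ^ d) = 1 := by
  have hd' : (2 : ℝ) ≤ d := by exact_mod_cast hd
  have : (d : ℝ) - 1 ≠ 0 := by linarith
  rw [lamC_succ, div_pow]
  field_simp
  ring

lemma lamC_mul_le {d : ℕ} (hd : 2 ≤ d) : lamC (d + 1) * (d + 1) ≤ 27 := by
  have hd' : (2 : ℝ) ≤ d := by exact_mod_cast hd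
  have hd1 : (0 : ℝ) < d - 1 := by linarith
  have h1 : ((d : ℝ) / (d - 1)) ^ d ≤ 9 := by
    have hle : (d : ℝ) / (d - 1) ≤ Real.exp (1 / ((d : ℝ) - 1)) := by
      refine le_trans (le_of_eq ?_) (Real.add_one_le_exp (1 / ((d : ℝ) - 1)))
      field_simp
      ring
    calc ((d : ℝ) / (d - 1)) ^ d ≤ Real.exp (1 / ((d : ℝ) - 1)) ^ d :=
          pow_le_pow_left₀ (by positivity) hle d
      _ = Real.exp (d * (1 / ((d : ℝ) - 1))) := (Real.exp_nat_mul _ _).symm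
      _ ≤ Real.exp (2 * 1) := by
          refine Real.exp_le_exp.2 ?_
          rw [mul_one_div, div_le_iff₀ hd1]
          linarith
      _ = Real.exp 1 ^ 2 := by rw [← Real.exp_nat_mul]; norm_num
      _ ≤ 3 ^ 2 := pow_le_pow_left₀ (Real.exp_pos 1).le
          (by linarith [Real.exp_one_lt_d9]) 2
      _ = 9 := by norm_num
  have h2 : ((d : ℝ) + 1) / (d - 1) ≤ 3 := by
    rw [div_le_iff₀ hd1]
    linarith
  calc lamC (d + 1) * (d + 1) = ((d : ℝ) / (d - 1)) ^ d * ((d + 1) / (d - 1)) := by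
        rw [lamC_succ, div_pow]
        field_simp
        ring
    _ ≤ 9 * 3 := by gcongr
    _ = 27 := by norm_num

end Threshold

/-- There is a universal constant `c ≥ 1` such that the Glauber
dynamics of the hardcore distribution at `λ = (1-δ)·λ_c(Δ)` on any graph of max
degree at most `Δ` has spectral gap at least `n^(-exp(c/δ))`. -/
theorem statement3 :
    ∃ c : ℝ, 1 ≤ c ∧
      ∀ δ : ℝ, 0 < δ → δ < 1 → ∀ (Δ : ℕ), 3 ≤ Δ →
      ∀ (n : ℕ), 2 ≤ n → ∀ G : SimpleGraph (Fin n),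
      (∀ v : Fin n, (G.neighborSet v).ncard ≤ Δ) →
      ∀ f : Finset (Fin n) → ℝ,
        varianceE (hardcore G ((1 - δ) * lamC Δ)) f
          ≤ (n : ℝ) ^ (Real.exp (c / δ))
            * dirichletForm (hardcore G ((1 - δ) * lamC Δ)) f := by
  refine ⟨9756, by norm_num, ?_⟩
  intro δ hδ hδ1 Δ hΔ n hn G hdeg f
  obtain ⟨d, rfl⟩ : ∃ d, Δ = d + 1 := ⟨Δ - 1, by omega⟩
  have hd : 2 ≤ d := by omega
  set lam := (1 - δ) * lamC (d + 1) with hlam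
  have hlc := lamC_pos hd
  have hl : 0 < lam := mul_pos (by linarith) hlc
  have hl27 : lam * (d + 1) ≤ 27 := by
    have h1 := lamC_mul_le hd
    have h2 : lam ≤ lamC (d + 1) := by rw [hlam]; nlinarith
    have h3 : (0 : ℝ) ≤ d + 1 := by positivity
    exact (mul_le_mul_of_nonneg_right h2 h3).trans h1
  have hl9 : lam ≤ 9 := by
    have hd' : (2 : ℝ) ≤ d := by exact_mod_cast hd
    nlinarith
  have hcrit : lam * ((d - 1) * (((d : ℝ) - 1) / d) ^ d) ≤ 1 - δ := by
    rw [hlam, mul_assoc, lamC_mul_critical hd, mul_one]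
  have hdeg' : ∀ v, (univ.filter fun u => G.Adj v u).card ≤ d + 1 := by
    intro v
    have := hdeg v
    rwa [Set.ncard_eq_toFinset_card', show (G.neighborSet v).toFinset =
      univ.filter fun u => G.Adj v u by ext u; simp] at this
  set h := ⌈541 / δ⌉₊ with hh
  have hh0 : 0 < h := Nat.ceil_pos.2 (by positivity)
  have hle : (h : ℝ) ≤ 542 / δ := by
    have h1 := (Nat.ceil_lt_add_one (show 0 ≤ 541 / δ by positivity)).le
    have h2 : 1 ≤ 1 / δ := by rw [le_div_iff₀ hδ]; linarith
    have h3 : 542 / δ = 541 / δ + 1 / δ := by ring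
    rw [hh]
    linarith
  have hpoly := covOn_self_le_polynomial hl hh0
    (fun U v => (influence_le hd hdeg' hl hl27 hδ hδ1 hcrit U v).trans (Nat.le_ceil _))
    n (by omega) univ (by simp) f
  have hn' : (2 : ℝ) ≤ n := by exact_mod_cast hn
  have hn0 : (n : ℝ) ≠ 0 := by linarith
  have hgrad : gradOn G lam univ f = n * dirichletForm (hardcore G lam) f := by
    rw [dirichletForm_hardcore hl f]
    field_simp
  have hD : 0 ≤ dirichletForm (hardcore G lam) f := by
    rw [dirichletForm_hardcore hl f]
    exact mul_nonneg (by positivity) (gradOn_nonneg hl _ _)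
  rw [varianceE_hardcore]
  refine hpoly.trans ?_
  rw [hgrad, ← mul_assoc]
  refine mul_le_mul_of_nonneg_right ?_ hD
  have hM : 2 * (1 + lam) * (1 + 2 * lam) ^ (2 * h) ≤ (n : ℝ) ^ (5 + 10 * h) := by
    calc 2 * (1 + lam) * (1 + 2 * lam) ^ (2 * h) ≤ 2 ^ 5 * (2 ^ 5) ^ (2 * h) := by
          gcongr <;> linarith
      _ = (2 : ℝ) ^ (5 + 10 * h) := by rw [← pow_mul, ← pow_add]; congr 1; ring
      _ ≤ _ := pow_le_pow_left₀ (by norm_num) hn' _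
  calc 2 * (1 + lam) * (1 + 2 * lam) ^ (2 * h) * (n : ℝ) ^ (2 * h) * n
      ≤ (n : ℝ) ^ (5 + 10 * h) * (n : ℝ) ^ (2 * h) * n := by gcongr
    _ = (n : ℝ) ^ (6 + 12 * h) := by rw [← pow_add, ← pow_succ]; congr 1; ring
    _ ≤ (n : ℝ) ^ (18 * h) := pow_le_pow_right₀ (by linarith) (by omega)
    _ = (n : ℝ) ^ (((18 * h : ℕ) : ℝ)) := (Real.rpow_natCast _ _).symm
    _ ≤ (n : ℝ) ^ (Real.exp (9756 / δ)) := by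
        refine Real.rpow_le_rpow_of_exponent_le (by linarith) ?_
        have h1 := Real.add_one_le_exp (9756 / δ)
        have h2 : 9756 / δ = 18 * (542 / δ) := by ring
        push_cast
        linarith

end PaperStmt
end
end

section
/- Let λ_max(Ψ_μ) denote the supremum of the set of real eigenvalues of Ψ_μ (this set is nonempty). Then λ_max(Ψ_μ)/(n−1) is a real eigenvalue of P_∅, and every real eigenvalue t of P_∅ with t ≠ 1 satisfies t ≤ λ_max(Ψ_μ)/(n−1). (That is, the second largest eigenvalue of P_∅ equals λ_max(Ψ_μ)/(n−1).) -/
open scoped Classical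
open Finset

noncomputable section

namespace PaperStmt

variable {n : ℕ}

/-- Probability of an event under `μ`. -/
def prE (μ : Finset (Fin n) → ℝ) (E : Finset (Fin n) → Prop) : ℝ :=
  ∑ S : Finset (Fin n), if E S then μ S else 0

/-- Conditional probability `Pr[E | F]` under `μ`. -/
def condPrE (μ : Finset (Fin n) → ℝ) (E F : Finset (Fin n) → Prop) : ℝ :=
  prE μ (fun S => E S ∧ F S) / prE μ F

/-- The pairwise influence matrix `Ψ_μ`. -/
def psi (μ : Finset (Fin n) → ℝ) : Matrix (Fin n) (Fin n) ℝ :=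
  fun i j => if i = j then 0 else
    condPrE μ (fun S => j ∈ S) (fun S => i ∈ S)
      - condPrE μ (fun S => j ∈ S) (fun S => i ∉ S)

/-- The event "`i` has state `s`" (`true` = in, `false` = out). -/
def stateEvent (i : Fin n) (s : Bool) : Finset (Fin n) → Prop :=
  fun S => if s then i ∈ S else i ∉ S

/-- The skeleton walk matrix `P_∅`, indexed by pairs `(i, s) ∈ [n] × {in, out}`. -/
def skeletonWalk (μ : Finset (Fin n) → ℝ) :
    Matrix (Fin n × Bool) (Fin n × Bool) ℝ :=
  fun p q => if p.1 = q.1 then 0 else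
    (1 / ((n : ℝ) - 1)) * condPrE μ (stateEvent q.1 q.2) (stateEvent p.1 p.2)

/-- `t` is a real eigenvalue of the real matrix `M`. -/
def IsRealEigenvalue {ι : Type*} [Fintype ι] (M : Matrix ι ι ℝ) (t : ℝ) : Prop :=
  ∃ v : ι → ℝ, v ≠ 0 ∧ M.mulVec v = t • v

theorem prE_and_add_prE_not_and (μ : Finset (Fin n) → ℝ) (E F : Finset (Fin n) → Prop) :
    prE μ (fun S => E S ∧ F S) + prE μ (fun S => ¬ E S ∧ F S) = prE μ F := by
  unfold prE
  rw [← Finset.sum_add_distrib]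
  refine Finset.sum_congr rfl fun S _ => ?_
  by_cases hE : E S <;> by_cases hF : F S <;> simp [hE, hF]

theorem prE_and_comm (μ : Finset (Fin n) → ℝ) (E F : Finset (Fin n) → Prop) :
    prE μ (fun S => E S ∧ F S) = prE μ (fun S => F S ∧ E S) := by
  simp only [and_comm]

theorem prE_not (μ : Finset (Fin n) → ℝ) (hsum : ∑ S : Finset (Fin n), μ S = 1)
    (E : Finset (Fin n) → Prop) : prE μ (fun S => ¬ E S) = 1 - prE μ E := by
  have h := prE_and_add_prE_not_and μ E (fun _ => True)
  have hT : prE μ (fun _ => True) = 1 := by simpa [prE] using hsum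
  simp only [and_true] at h
  linarith

theorem condPrE_not (μ : Finset (Fin n) → ℝ) (E F : Finset (Fin n) → Prop)
    (hF : prE μ F ≠ 0) : condPrE μ (fun S => ¬ E S) F = 1 - condPrE μ E F := by
  unfold condPrE
  rw [eq_sub_iff_add_eq, ← add_div, add_comm, prE_and_add_prE_not_and, div_self hF]

theorem stateEvent_true (i : Fin n) : stateEvent i true = fun S => i ∈ S := by
  funext S; simp [stateEvent]

theorem stateEvent_false (i : Fin n) : stateEvent i false = fun S => i ∉ S := by
  funext S; simp [stateEvent]

/-- Off the diagonal, `Ψ_μ(i, j)` is the covariance of `i ∈ S` and `j ∈ S` divided by the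
variance of `i ∈ S`. -/
theorem psi_apply_of_ne (μ : Finset (Fin n) → ℝ) (hsum : ∑ S : Finset (Fin n), μ S = 1)
    {i j : Fin n} (hij : i ≠ j) (h0 : 0 < prE μ (fun S => i ∈ S))
    (h1 : prE μ (fun S => i ∈ S) < 1) :
    psi μ i j = (prE μ (fun S => j ∈ S ∧ i ∈ S)
        - prE μ (fun S => i ∈ S) * prE μ (fun S => j ∈ S))
      / (prE μ (fun S => i ∈ S) * (1 - prE μ (fun S => i ∈ S))) := by
  have hnot := prE_not μ hsum (fun S => i ∈ S)
  have hsplit := prE_and_add_prE_not_and μ (fun S => i ∈ S) (fun S => j ∈ S)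
  rw [prE_and_comm, prE_and_comm μ (fun S => i ∉ S)] at hsplit
  have hne : 1 - prE μ (fun S => i ∈ S) ≠ 0 := by linarith
  have hout : prE μ (fun S => j ∈ S ∧ i ∉ S)
      = prE μ (fun S => j ∈ S) - prE μ (fun S => j ∈ S ∧ i ∈ S) := by linarith
  simp only [psi, hij, if_false, condPrE, hnot, hout]
  field_simp
  ring

/-- Conditioning on the state of `i` shifts the marginal of `j` by a multiple of `Ψ_μ(i, j)`. -/
theorem condPrE_stateEvent_sub (μ : Finset (Fin n) → ℝ)
    (hsum : ∑ S : Finset (Fin n), μ S = 1) {i j : Fin n} (hij : i ≠ j)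
    (h0 : 0 < prE μ (fun S => i ∈ S)) (h1 : prE μ (fun S => i ∈ S) < 1) (s : Bool) :
    condPrE μ (fun S => j ∈ S) (stateEvent i s) - prE μ (fun S => j ∈ S)
      = ((if s then 1 else 0) - prE μ (fun S => i ∈ S)) * psi μ i j := by
  have hnot := prE_not μ hsum (fun S => i ∈ S)
  have hsplit := prE_and_add_prE_not_and μ (fun S => i ∈ S) (fun S => j ∈ S)
  rw [prE_and_comm, prE_and_comm μ (fun S => i ∉ S)] at hsplit
  have hne : 1 - prE μ (fun S => i ∈ S) ≠ 0 := by linarith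
  have hout : prE μ (fun S => j ∈ S ∧ i ∉ S)
      = prE μ (fun S => j ∈ S) - prE μ (fun S => j ∈ S ∧ i ∈ S) := by linarith
  rw [psi_apply_of_ne μ hsum hij h0 h1]
  cases s
  · simp only [stateEvent_false, condPrE, hnot, hout, Bool.false_eq_true, if_false]
    field_simp
    ring
  · simp only [stateEvent_true, condPrE, if_true]
    field_simp

theorem prE_stateEvent_ne_zero (μ : Finset (Fin n) → ℝ)
    (hsum : ∑ S : Finset (Fin n), μ S = 1) {i : Fin n}
    (h0 : 0 < prE μ (fun S => i ∈ S)) (h1 : prE μ (fun S => i ∈ S) < 1) (s : Bool) :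
    prE μ (stateEvent i s) ≠ 0 := by
  cases s
  · rw [stateEvent_false, prE_not μ hsum]
    linarith
  · rw [stateEvent_true]
    exact h0.ne'

theorem skeletonWalk_mulVec_apply (μ : Finset (Fin n) → ℝ)
    (hsum : ∑ S : Finset (Fin n), μ S = 1) {i : Fin n}
    (h0 : 0 < prE μ (fun S => i ∈ S)) (h1 : prE μ (fun S => i ∈ S) < 1) (s : Bool)
    (v : Fin n × Bool → ℝ) :
    (skeletonWalk μ).mulVec v (i, s) = 1 / ((n : ℝ) - 1) *
      ∑ j, if i = j then 0 else v (j, false)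
        + condPrE μ (fun S => j ∈ S) (stateEvent i s) * (v (j, true) - v (j, false)) := by
  rw [Matrix.mulVec, dotProduct, Fintype.sum_prod_type, Finset.mul_sum]
  refine Finset.sum_congr rfl fun j _ => ?_
  by_cases hij : i = j
  · simp [skeletonWalk, hij]
  · simp only [skeletonWalk, hij, if_false, Fintype.sum_bool, stateEvent_true j,
      stateEvent_false j]
    rw [condPrE_not μ (fun S => j ∈ S) _ (prE_stateEvent_ne_zero μ hsum h0 h1 s)]
    ring

/-- The differences `v(i, in) - v(i, out)` intertwine `(n - 1) P_∅` with `Ψ_μ`. -/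
theorem skeletonWalk_mulVec_sub (μ : Finset (Fin n) → ℝ)
    (hsum : ∑ S : Finset (Fin n), μ S = 1) {i : Fin n}
    (h0 : 0 < prE μ (fun S => i ∈ S)) (h1 : prE μ (fun S => i ∈ S) < 1)
    (v : Fin n × Bool → ℝ) :
    (skeletonWalk μ).mulVec v (i, true) - (skeletonWalk μ).mulVec v (i, false)
      = 1 / ((n : ℝ) - 1) * (psi μ).mulVec (fun j => v (j, true) - v (j, false)) i := by
  rw [skeletonWalk_mulVec_apply μ hsum h0 h1, skeletonWalk_mulVec_apply μ hsum h0 h1,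
    ← mul_sub, ← Finset.sum_sub_distrib, Matrix.mulVec, dotProduct]
  congr 1
  refine Finset.sum_congr rfl fun j _ => ?_
  by_cases hij : i = j
  · simp [psi, hij]
  · simp only [psi, hij, if_false, stateEvent_true, stateEvent_false]
    ring

/-- Eigenvectors of `Ψ_μ` lift to eigenvectors of `P_∅` that have mean zero at each site. -/
theorem isRealEigenvalue_skeletonWalk_of_psi (μ : Finset (Fin n) → ℝ)
    (hsum : ∑ S : Finset (Fin n), μ S = 1)
    (hmarg : ∀ i : Fin n, 0 < prE μ (fun S => i ∈ S) ∧ prE μ (fun S => i ∈ S) < 1)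
    {t : ℝ} (ht : IsRealEigenvalue (psi μ) t) :
    IsRealEigenvalue (skeletonWalk μ) (t / ((n : ℝ) - 1)) := by
  obtain ⟨w, hw, hwt⟩ := ht
  refine ⟨fun x => ((if x.2 then 1 else 0) - prE μ (fun S => x.1 ∈ S)) * w x.1, ?_, ?_⟩
  · refine fun h => hw (funext fun i => ?_)
    have hin := congrFun h (i, true)
    have hout := congrFun h (i, false)
    simp only [if_true, Bool.false_eq_true, if_false, Pi.zero_apply] at hin hout ⊢
    linarith
  · funext x
    obtain ⟨i, s⟩ := x
    rw [skeletonWalk_mulVec_apply μ hsum (hmarg i).1 (hmarg i).2]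
    have hi := congrFun hwt i
    simp only [Matrix.mulVec, dotProduct, Pi.smul_apply, smul_eq_mul] at hi ⊢
    rw [one_div_mul_eq_div, div_mul_eq_mul_div, mul_left_comm t, ← hi, Finset.mul_sum]
    congr 1
    refine Finset.sum_congr rfl fun j _ => ?_
    by_cases hij : i = j
    · simp [psi, hij]
    · rw [← mul_assoc, ← condPrE_stateEvent_sub μ hsum hij (hmarg i).1 (hmarg i).2]
      simp only [hij, if_true, Bool.false_eq_true, if_false]
      ring

/-- Eigenvalues of `P_∅` come from `Ψ_μ` or from the simple random walk on the complete graph. -/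
theorem isRealEigenvalue_skeletonWalk_cases (hn : 2 ≤ n) (μ : Finset (Fin n) → ℝ)
    (hsum : ∑ S : Finset (Fin n), μ S = 1)
    (hmarg : ∀ i : Fin n, 0 < prE μ (fun S => i ∈ S) ∧ prE μ (fun S => i ∈ S) < 1)
    {t : ℝ} (ht : IsRealEigenvalue (skeletonWalk μ) t) :
    IsRealEigenvalue (psi μ) (t * ((n : ℝ) - 1)) ∨ t = 1 ∨ t = -1 / ((n : ℝ) - 1) := by
  have hn1 : (0 : ℝ) < (n : ℝ) - 1 := by
    have : (2 : ℝ) ≤ n := by exact_mod_cast hn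
    linarith
  obtain ⟨v, hv, hvt⟩ := ht
  by_cases hw : (fun j => v (j, true) - v (j, false)) = 0
  · right
    have hvv : ∀ j, v (j, true) = v (j, false) := fun j => sub_eq_zero.mp (congrFun hw j)
    have key : ∀ i, ∑ j, v (j, false) = (t * ((n : ℝ) - 1) + 1) * v (i, false) := by
      intro i
      have hi := congrFun hvt (i, false)
      rw [skeletonWalk_mulVec_apply μ hsum (hmarg i).1 (hmarg i).2] at hi
      have hsplit : ∑ j, v (j, false)
          = v (i, false) + ∑ j, if i = j then 0 else v (j, false) := by
        rw [← Finset.sum_ite_eq univ i (fun j => v (j, false)) |>.trans (if_pos (mem_univ i)),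
          ← Finset.sum_add_distrib]
        refine Finset.sum_congr rfl fun j _ => ?_
        by_cases hij : i = j <;> simp [hij]
      simp only [hvv, sub_self, mul_zero, add_zero, Pi.smul_apply, smul_eq_mul] at hi
      rw [one_div_mul_eq_div, div_eq_iff hn1.ne'] at hi
      rw [hsplit, hi]
      ring
    obtain ⟨i, hi⟩ : ∃ i, v (i, false) ≠ 0 := by
      by_contra! h
      refine hv (funext fun x => ?_)
      obtain ⟨i, s⟩ := x
      cases s
      · exact h i
      · exact (hvv i).trans (h i)
    have htotal : (∑ j, v (j, false)) * (n - (t * ((n : ℝ) - 1) + 1)) = 0 := by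
      have h := Finset.sum_congr (rfl : (univ : Finset (Fin n)) = univ) fun i _ => key i
      rw [← Finset.mul_sum] at h
      simp only [sum_const, card_univ, Fintype.card_fin, nsmul_eq_mul] at h
      linarith
    rcases mul_eq_zero.mp htotal with h | h
    · right
      rw [key i] at h
      rw [eq_div_iff hn1.ne']
      linarith [(mul_eq_zero.mp h).resolve_right hi]
    · left
      have : (1 - t) * ((n : ℝ) - 1) = 0 := by linarith
      linarith [(mul_eq_zero.mp this).resolve_right hn1.ne']
  · left
    refine ⟨_, hw, funext fun i => ?_⟩
    have h := skeletonWalk_mulVec_sub μ hsum (hmarg i).1 (hmarg i).2 v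
    rw [hvt, one_div_mul_eq_div, eq_div_iff hn1.ne'] at h
    rw [← h]
    simp only [Pi.smul_apply, smul_eq_mul]
    ring

theorem isRealEigenvalue_iff_hasEigenvalue {ι : Type*} [Fintype ι] (M : Matrix ι ι ℝ) (t : ℝ) :
    IsRealEigenvalue M t ↔ Module.End.HasEigenvalue (Matrix.toLin' M) t := by
  constructor
  · rintro ⟨v, hv, hvt⟩
    exact Module.End.hasEigenvalue_of_hasEigenvector
      (Module.End.hasEigenvector_iff.mpr
        ⟨Module.End.mem_eigenspace_iff.mpr (by rwa [Matrix.toLin'_apply]), hv⟩)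
  · intro h
    obtain ⟨v, hv⟩ := h.exists_hasEigenvector
    exact ⟨v, hv.2, by simpa using hv.apply_eq_smul⟩

theorem finite_setOf_isRealEigenvalue {ι : Type*} [Fintype ι] (M : Matrix ι ι ℝ) :
    {t : ℝ | IsRealEigenvalue M t}.Finite := by
  simp only [isRealEigenvalue_iff_hasEigenvalue]
  exact Module.End.finite_hasEigenvalue _

/-- A traceless matrix that is reversible with respect to positive weights has a nonnegative
real eigenvalue. -/
theorem exists_nonneg_isRealEigenvalue {ι : Type*} [Fintype ι] [Nonempty ι]
    (M : Matrix ι ι ℝ) (d : ι → ℝ) (hd : ∀ i, 0 < d i)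
    (hrev : ∀ i j, d i * M i j = d j * M j i) (htr : M.trace = 0) :
    ∃ t, 0 ≤ t ∧ IsRealEigenvalue M t := by
  have hs : ∀ i, 0 < √(d i) := fun i => Real.sqrt_pos.mpr (hd i)
  let A : Matrix ι ι ℝ := Matrix.of fun i j => √(d i) * M i j / √(d j)
  have hA : A.IsHermitian := by
    ext i j
    simp only [A, Matrix.conjTranspose_apply, Matrix.of_apply, star_trivial]
    rw [div_eq_div_iff (hs i).ne' (hs j).ne']
    linear_combination M j i * Real.mul_self_sqrt (hd j).le
      - M i j * Real.mul_self_sqrt (hd i).le - hrev i j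
  have hAtr : ∑ i, hA.eigenvalues i = 0 := by
    have h := hA.trace_eq_sum_eigenvalues
    simp only [RCLike.ofReal_real_eq_id, id_eq] at h
    rw [← h, ← htr]
    refine Finset.sum_congr rfl fun i _ => ?_
    simp only [A, Matrix.diag_apply, Matrix.of_apply]
    rw [mul_div_assoc, mul_div_cancel₀ _ (hs i).ne']
  obtain ⟨k, -, hk⟩ : ∃ k ∈ (univ : Finset ι), 0 ≤ hA.eigenvalues k :=
    Finset.exists_le_of_sum_le univ_nonempty (by simp [hAtr])
  refine ⟨hA.eigenvalues k, hk, fun j => hA.eigenvectorBasis k j / √(d j), fun h => ?_, ?_⟩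
  · refine hA.eigenvectorBasis.toBasis.ne_zero k ?_
    ext j
    simpa [(hs j).ne'] using congrFun h j
  · funext i
    have hi := congrFun (hA.mulVec_eigenvectorBasis k) i
    simp only [Matrix.mulVec, dotProduct, Pi.smul_apply, smul_eq_mul, A, Matrix.of_apply] at hi ⊢
    rw [← mul_div_assoc, ← hi, Finset.sum_div]
    refine Finset.sum_congr rfl fun j _ => ?_
    have := (hs i).ne'
    have := (hs j).ne'
    field_simp

theorem exists_nonneg_isRealEigenvalue_psi (hn : 2 ≤ n) (μ : Finset (Fin n) → ℝ)
    (hsum : ∑ S : Finset (Fin n), μ S = 1)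
    (hmarg : ∀ i : Fin n, 0 < prE μ (fun S => i ∈ S) ∧ prE μ (fun S => i ∈ S) < 1) :
    ∃ t, 0 ≤ t ∧ IsRealEigenvalue (psi μ) t := by
  have : Nonempty (Fin n) := ⟨⟨0, by omega⟩⟩
  have hd : ∀ i : Fin n, 0 < prE μ (fun S => i ∈ S) * (1 - prE μ (fun S => i ∈ S)) :=
    fun i => mul_pos (hmarg i).1 (sub_pos.mpr (hmarg i).2)
  refine exists_nonneg_isRealEigenvalue (psi μ) _ hd (fun i j => ?_) ?_
  · by_cases hij : i = j
    · rw [hij]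
    · rw [psi_apply_of_ne μ hsum hij (hmarg i).1 (hmarg i).2,
        psi_apply_of_ne μ hsum (Ne.symm hij) (hmarg j).1 (hmarg j).2,
        mul_div_cancel₀ _ (hd i).ne', mul_div_cancel₀ _ (hd j).ne', prE_and_comm]
      ring
  · simp [Matrix.trace, psi]

/-- The set of real eigenvalues of `Ψ_μ` is nonempty,
`λ_max(Ψ_μ)/(n-1)` is a real eigenvalue of `P_∅`, and every real eigenvalue
`t ≠ 1` of `P_∅` satisfies `t ≤ λ_max(Ψ_μ)/(n-1)`. -/
theorem statement5 (n : ℕ) (hn : 2 ≤ n) (μ : Finset (Fin n) → ℝ)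
    (hpos : ∀ S, 0 ≤ μ S) (hsum : ∑ S : Finset (Fin n), μ S = 1)
    (hmarg : ∀ i : Fin n, 0 < prE μ (fun S => i ∈ S)
      ∧ prE μ (fun S => i ∈ S) < 1) :
    ({t : ℝ | IsRealEigenvalue (psi μ) t}).Nonempty
    ∧ IsRealEigenvalue (skeletonWalk μ)
        (sSup {t : ℝ | IsRealEigenvalue (psi μ) t} / ((n : ℝ) - 1))
    ∧ ∀ t : ℝ, IsRealEigenvalue (skeletonWalk μ) t → t ≠ 1 →
        t ≤ sSup {t : ℝ | IsRealEigenvalue (psi μ) t} / ((n : ℝ) - 1) := by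
  obtain ⟨t₀, ht₀, hev₀⟩ := exists_nonneg_isRealEigenvalue_psi hn μ hsum hmarg
  have hfin := finite_setOf_isRealEigenvalue (psi μ)
  have hne : {t : ℝ | IsRealEigenvalue (psi μ) t}.Nonempty := ⟨t₀, hev₀⟩
  have hn1 : (0 : ℝ) < (n : ℝ) - 1 := by
    have : (2 : ℝ) ≤ n := by exact_mod_cast hn
    linarith
  refine ⟨hne, isRealEigenvalue_skeletonWalk_of_psi μ hsum hmarg (hne.csSup_mem hfin),
    fun t ht ht1 => ?_⟩
  rw [le_div_iff₀ hn1]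
  rcases isRealEigenvalue_skeletonWalk_cases hn μ hsum hmarg ht with h | h | h
  · exact le_csSup hfin.bddAbove h
  · exact absurd h ht1
  · rw [h, div_mul_cancel₀ _ hn1.ne']
    linarith [le_csSup hfin.bddAbove hev₀]

end PaperStmt
end
end
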